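/- The topological entropy is continuous at every ergodic toral automorphism in the C^1 topology. Precisely: let A ∈ GL(d,ℤ) be ergodic. For every ε > 0 there exists η > 0 such that for every C^1, ℤ^d-periodic map g : ℝ^d → ℝ^d with ‖g‖_{C^1} < η for which F(v) := A v + g(v) is a C^1 diffeomorphism of ℝ^d, the induced homeomorphism f : 𝕋^d → 𝕋^d (with f ∘ π = π ∘ F) satisfies |h_top(f) − h_top(T_A)| ≤ ε. -/

import Mathlib

open Filter

namespace Paper

/-- The real matrix associated to an integer matrix. -/
noncomputable def matR {d : ℕ} (A : Matrix (Fin d) (Fin d) ℤ) : Matrix (Fin d) (Fin d) ℝ :=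
  A.map (fun n => (n : ℝ))

/-- The complex matrix associated to an integer matrix. -/
noncomputable def matC {d : ℕ} (A : Matrix (Fin d) (Fin d) ℤ) : Matrix (Fin d) (Fin d) ℂ :=
  A.map (fun n => (n : ℂ))

/-- `A` is ergodic: no complex eigenvalue of `A` is a root of unity. -/
def IsErgodicMatrix {d : ℕ} (A : Matrix (Fin d) (Fin d) ℤ) : Prop :=
  ∀ z : ℂ, (matC A).charpoly.IsRoot z → ∀ k : ℕ, 0 < k → z ^ k ≠ 1

/-- A lattice vector, i.e. an integer vector viewed in `ℝ^d`. -/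
def latVec {d : ℕ} (m : Fin d → ℤ) : Fin d → ℝ := fun i => (m i : ℝ)

/-- The quotient (pseudo)metric on the torus `𝕋^d = ℝ^d/ℤ^d`, computed on
representatives: `d(π u, π w) = inf_{m ∈ ℤ^d} ‖u - w - m‖` for a fixed norm on `ℝ^d`. -/
noncomputable def distQ {d : ℕ} (u w : Fin d → ℝ) : ℝ :=
  ⨅ m : Fin d → ℤ, ‖u - w - latVec m‖



/-- The dynamical distance `d_n(x,y) = max_{0 ≤ j < n} ρ(f^j x, f^j y)`. -/
noncomputable def dynDist {X : Type*} (ρ : X → X → ℝ) (f : X → X) (n : ℕ) (x y : X) : ℝ :=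
  ⨆ j : Fin n, ρ (f^[(j : ℕ)] x) (f^[(j : ℕ)] y)

/-- `S` is `(n,ε)`-separated for `f` with respect to the (pseudo)metric `ρ`. -/
def IsSeparated {X : Type*} (ρ : X → X → ℝ) (f : X → X) (n : ℕ) (ε : ℝ) (S : Finset X) : Prop :=
  ∀ x ∈ S, ∀ y ∈ S, x ≠ y → ε < dynDist ρ f n x y

/-- `N(f,n,ε)`: the maximal cardinality of an `(n,ε)`-separated set. -/
noncomputable def sepNum {X : Type*} (ρ : X → X → ℝ) (f : X → X) (n : ℕ) (ε : ℝ) : ℕ :=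
  sSup {k | ∃ S : Finset X, IsSeparated ρ f n ε S ∧ S.card = k}

/-- The topological entropy
`h_top(f) = lim_{ε→0⁺} limsup_{n→∞} (1/n) log N(f,n,ε)`; since `N(f,n,ε)` is
antitone in `ε`, the limit as `ε → 0⁺` equals the supremum over `ε > 0`. -/
noncomputable def topEnt {X : Type*} (ρ : X → X → ℝ) (f : X → X) : ℝ :=
  ⨆ ε : {e : ℝ // 0 < e},
    Filter.limsup (fun n : ℕ => Real.log (sepNum ρ f n ε) / n) Filter.atTop


lemma exists_bound_of_le_mul_add {a : ℕ → ℝ} {ρ t K : ℝ} (hρ : 0 ≤ ρ) (hρt : ρ < t)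
    (h : ∀ n, a (n + 1) ≤ ρ * a n + K * t ^ n) : ∃ C, ∀ n, a n ≤ C * t ^ n := by
  refine ⟨max (a 0) (K / (t - ρ)), fun n => ?_⟩
  induction n with
  | zero => simp
  | succ n ih =>
    have ht : 0 ≤ t ^ n := pow_nonneg (hρ.trans hρt.le) n
    have hK : K ≤ max (a 0) (K / (t - ρ)) * (t - ρ) :=
      (div_le_iff₀ (sub_pos.2 hρt)).1 (le_max_right _ _)
    calc a (n + 1) ≤ ρ * a n + K * t ^ n := h n
      _ ≤ ρ * (max (a 0) (K / (t - ρ)) * t ^ n)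
          + max (a 0) (K / (t - ρ)) * (t - ρ) * t ^ n := by gcongr
      _ = max (a 0) (K / (t - ρ)) * t ^ (n + 1) := by ring

section GeneralizedEigenvectors

variable {X : Type*} [NormedAddCommGroup X] [NormedSpace ℂ X]

lemma exists_norm_pow_le_of_sub_pow_eq_zero (M : Module.End ℂ X) {μ : ℂ} {t : ℝ} (h : ‖μ‖ < t)
    (k : ℕ) : ∀ x : X, ((M - algebraMap ℂ (Module.End ℂ X) μ) ^ k) x = 0 →
      ∃ C, ∀ n, ‖(M ^ n) x‖ ≤ C * t ^ n := by
  induction k with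
  | zero => intro x hx; exact ⟨0, fun n => by simp_all⟩
  | succ k ih =>
    intro x hx
    obtain ⟨C, hC⟩ := ih ((M - algebraMap ℂ (Module.End ℂ X) μ) x) (by
      rwa [← Module.End.mul_apply, ← pow_succ])
    refine exists_bound_of_le_mul_add (K := C) (norm_nonneg μ) h fun n => ?_
    have : (M ^ (n + 1)) x = μ • (M ^ n) x
        + (M ^ n) ((M - algebraMap ℂ (Module.End ℂ X) μ) x) := by
      simp [pow_succ, Module.algebraMap_end_apply]
    rw [this, ← norm_smul]
    exact (norm_add_le _ _).trans (by gcongr; exact hC n)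

lemma exists_norm_inv_pow_le_of_sub_pow_eq_zero (M M' : Module.End ℂ X) (hM : ∀ x, M' (M x) = x)
    {μ : ℂ} {s : ℝ} (hμ : μ ≠ 0) (h : ‖μ‖⁻¹ < s)
    (k : ℕ) : ∀ x : X, ((M - algebraMap ℂ (Module.End ℂ X) μ) ^ k) x = 0 →
      ∃ C, ∀ n, ‖(M' ^ n) x‖ ≤ C * s ^ n := by
  induction k with
  | zero => intro x hx; exact ⟨0, fun n => by simp_all⟩
  | succ k ih =>
    intro x hx
    obtain ⟨C, hC⟩ := ih ((M - algebraMap ℂ (Module.End ℂ X) μ) x) (by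
      rwa [← Module.End.mul_apply, ← pow_succ])
    refine exists_bound_of_le_mul_add (ρ := ‖μ‖⁻¹) (K := ‖μ‖⁻¹ * (C * s)) (by positivity) h
      fun n => ?_
    have : (M' ^ (n + 1)) x = μ⁻¹ • ((M' ^ n) x
        - (M' ^ (n + 1)) ((M - algebraMap ℂ (Module.End ℂ X) μ) x)) := by
      simp [pow_succ, Module.algebraMap_end_apply, hM, smul_smul, hμ]
    rw [this, norm_smul, norm_inv]
    calc ‖μ‖⁻¹ * ‖(M' ^ n) x - (M' ^ (n + 1)) ((M - algebraMap ℂ (Module.End ℂ X) μ) x)‖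
        ≤ ‖μ‖⁻¹ * (‖(M' ^ n) x‖ + C * s ^ (n + 1)) := by
          gcongr; exact (norm_sub_le _ _).trans (by gcongr; exact hC _)
      _ = _ := by ring

end GeneralizedEigenvectors

section Growth

variable {E : Type*} [NormedAddCommGroup E] [NormedSpace ℝ E]

/-- The vectors whose iterates under `T` grow at most like `t ^ n`. -/
def growthSubmodule (T : Module.End ℝ E) (t : ℝ) : Submodule ℝ E where
  carrier := {x | ∃ C, ∀ n, ‖(T ^ n) x‖ ≤ C * t ^ n}
  zero_mem' := ⟨0, fun n => by simp⟩
  add_mem' := by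
    rintro x y ⟨C, hC⟩ ⟨D, hD⟩
    refine ⟨C + D, fun n => ?_⟩
    rw [map_add, add_mul]
    exact (norm_add_le _ _).trans (add_le_add (hC n) (hD n))
  smul_mem' := by
    rintro c x ⟨C, hC⟩
    refine ⟨‖c‖ * C, fun n => ?_⟩
    rw [map_smul, norm_smul, mul_assoc]
    gcongr
    exact hC n

lemma map_mem_growthSubmodule [FiniteDimensional ℝ E] {S T : Module.End ℝ E} (hST : Commute S T)
    {t : ℝ} {x : E} (hx : x ∈ growthSubmodule T t) :
    S x ∈ growthSubmodule T t := by
  obtain ⟨C, hC⟩ := hx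
  refine ⟨‖LinearMap.toContinuousLinearMap S‖ * C, fun n => ?_⟩
  rw [← Module.End.mul_apply, ← (hST.pow_right n).eq, Module.End.mul_apply, mul_assoc]
  refine ((LinearMap.toContinuousLinearMap S).le_opNorm ((T ^ n) x)).trans ?_
  gcongr
  exact hC n

lemma exists_opNorm_pow_le [CompleteSpace E] (T : E →L[ℝ] E) {t : ℝ} (ht : 0 < t)
    (h : ∀ x, ∃ C, ∀ n, ‖(T ^ n) x‖ ≤ C * t ^ n) :
    ∃ C, 0 ≤ C ∧ ∀ n, ‖T ^ n‖ ≤ C * t ^ n := by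
  have hn : ∀ n : ℕ, 0 < t ^ n := fun n => pow_pos ht n
  obtain ⟨C, hC⟩ := banach_steinhaus (g := fun n : ℕ => (t ^ n)⁻¹ • T ^ n) (by
    intro x
    obtain ⟨C, hC⟩ := h x
    refine ⟨C, fun n => ?_⟩
    rw [smul_apply, norm_smul, norm_inv, Real.norm_of_nonneg (hn n).le,
      inv_mul_le_iff₀ (hn n), mul_comm]
    exact hC n)
  have hC' : ∀ n, ‖T ^ n‖ ≤ C * t ^ n := fun n => by
    have := hC n
    rwa [norm_smul, norm_inv, Real.norm_of_nonneg (hn n).le, inv_mul_le_iff₀ (hn n),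
      mul_comm] at this
  exact ⟨C, (norm_nonneg _).trans ((hC' 0).trans (by simp)), hC'⟩

end Growth

lemma exists_inv_norm_lt_of_finite {S : Set ℂ} (hS : S.Finite) :
    ∃ s : ℝ, 0 < s ∧ s < 1 ∧ ∀ μ ∈ S, 1 < ‖μ‖ → ‖μ‖⁻¹ < s := by
  have h : ∀ᶠ s in nhdsWithin (1 : ℝ) (Set.Iio 1), ∀ μ ∈ S, 1 < ‖μ‖ → ‖μ‖⁻¹ < s := by
    rw [eventually_all_finite hS]
    intro μ _
    by_cases h : 1 < ‖μ‖
    · filter_upwards [nhdsWithin_le_nhds (lt_mem_nhds (inv_lt_one_of_one_lt₀ h))] with s hs _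
        using hs
    · exact Eventually.of_forall fun s h' => absurd h' h
  obtain ⟨s, hs, h0, h1⟩ := (h.and ((show ∀ᶠ s : ℝ in nhdsWithin 1 (Set.Iio 1), 0 < s from
    nhdsWithin_le_nhds (lt_mem_nhds one_pos)).and
    self_mem_nhdsWithin)).exists
  exact ⟨s, h0, h1, hs⟩

/-- The splitting of `ℝ^d` into the expanding subspace and its center-stable complement. -/
theorem exists_unstable_splitting {d : ℕ} (A : Matrix (Fin d) (Fin d) ℝ) (hA : IsUnit A.det) :
    ∃ (U V : Submodule ℝ (Fin d → ℝ)) (Φ : (Fin d → ℝ) ≃L[ℝ] U × V) (Au : U ≃L[ℝ] U)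
      (Ac : V →L[ℝ] V), (∀ x, Φ (A.mulVec x) = (Au (Φ x).1, Ac (Φ x).2)) ∧
      (∃ s C : ℝ, 0 < s ∧ s < 1 ∧ 0 ≤ C ∧ ∀ n : ℕ, ‖(Au.symm : U →L[ℝ] U) ^ n‖ ≤ C * s ^ n) ∧
      ∀ t : ℝ, 1 < t → ∃ C, 0 ≤ C ∧ ∀ n : ℕ, ‖Ac ^ n‖ ≤ C * t ^ n := by
  classical
  set T : Module.End ℝ (Fin d → ℝ) := Matrix.toLin' A with hT
  set T' : Module.End ℝ (Fin d → ℝ) := Matrix.toLin' A⁻¹ with hT'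
  have hTT' : ∀ x, T (T' x) = x := fun x => by simp [hT, hT', Matrix.mul_nonsing_inv _ hA]
  have hT'T : ∀ x, T' (T x) = x := fun x => by simp [hT, hT', Matrix.nonsing_inv_mul _ hA]
  have hcomm : Commute T T' := LinearMap.ext fun x => by simp [hTT', hT'T]
  have hpow : ∀ n x, (T ^ n) ((T' ^ n) x) = x := fun n x => by
    rw [← Module.End.mul_apply, ← hcomm.mul_pow, show T * T' = 1 from LinearMap.ext hTT']
    simp
  set c : ℝ →+* ℂ := Complex.ofRealHom
  set M : Module.End ℂ (Fin d → ℂ) := Matrix.toLin' (A.map c) with hM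
  set M' : Module.End ℂ (Fin d → ℂ) := Matrix.toLin' (A⁻¹.map c) with hM'
  have hM'M : ∀ x, M' (M x) = x := fun x => by
    rw [hM, hM', ← Matrix.toLin'_mul_apply, ← Matrix.map_mul, Matrix.nonsing_inv_mul _ hA]
    simp
  have hre : ∀ (B : Matrix (Fin d) (Fin d) ℝ) (z : Fin d → ℂ) (n : ℕ),
      ‖(Matrix.toLin' B ^ n) (fun i => (z i).re)‖ ≤ ‖(Matrix.toLin' (B.map c) ^ n) z‖ := by
    intro B z n
    have : ∀ w : Fin d → ℂ, Matrix.toLin' B (fun i => (w i).re)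
        = fun i => (Matrix.toLin' (B.map c) w i).re := fun w => by
      ext i; simp [Matrix.mulVec, dotProduct, c]
    have h2 : (Matrix.toLin' B ^ n) (fun i => (z i).re)
        = fun i => ((Matrix.toLin' (B.map c) ^ n) z i).re := by
      induction n with
      | zero => simp
      | succ n ih => rw [pow_succ', pow_succ', Module.End.mul_apply, ih, this]; rfl
    rw [h2, pi_norm_le_iff_of_nonneg (norm_nonneg _)]
    exact fun i => (Complex.abs_re_le_norm _).trans (norm_le_pi_norm _ i)
  obtain ⟨s, hs0, hs1, hs⟩ := exists_inv_norm_lt_of_finite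
    (S := {μ : ℂ | M.HasEigenvalue μ}) (Module.End.finite_hasEigenvalue M)
  set U := growthSubmodule T' s with hU
  set V : Submodule ℝ (Fin d → ℝ) :=
    ⨅ t : {t : ℝ // 1 < t}, growthSubmodule T t with hV
  have hspan : ∀ z : Fin d → ℂ, (fun i => (z i).re) ∈ U ⊔ V := by
    intro z
    have hz : z ∈ ⨆ μ, M.maxGenEigenspace μ := by
      rw [Module.End.iSup_maxGenEigenspace_eq_top]; trivial
    induction hz using Submodule.iSup_induction' with
    | mem μ z hz =>
      by_cases hz0 : z = 0
      · subst hz0; exact (U ⊔ V).zero_mem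
      obtain ⟨k, hk⟩ := (Module.End.mem_maxGenEigenspace _ _ _).1 hz
      rw [← Algebra.algebraMap_eq_smul_one] at hk
      rcases lt_or_ge 1 ‖μ‖ with h | h
      · have hev : M.HasEigenvalue μ := by
          refine Module.End.hasEigenvalue_of_hasGenEigenvalue (k := k) ?_
          rw [Module.End.hasGenEigenvalue_iff]
          intro hbot
          apply hz0
          rw [← Submodule.mem_bot ℂ, ← hbot, Module.End.mem_genEigenspace_nat,
            LinearMap.mem_ker, ← Algebra.algebraMap_eq_smul_one]
          exact hk
        obtain ⟨C, hC⟩ := exists_norm_inv_pow_le_of_sub_pow_eq_zero M M' hM'M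
          (by rintro rfl; simp at h; linarith) (hs μ hev h) k z hk
        exact Submodule.mem_sup_left ⟨C, fun n => (hre _ _ _).trans (hC n)⟩
      · refine Submodule.mem_sup_right ((Submodule.mem_iInf _).2 fun t => ?_)
        obtain ⟨C, hC⟩ := exists_norm_pow_le_of_sub_pow_eq_zero M (h.trans_lt t.2) k z hk
        exact ⟨C, fun n => (hre _ _ _).trans (hC n)⟩
    | zero => exact (U ⊔ V).zero_mem
    | add z w _ _ hz hw => exact (U ⊔ V).add_mem hz hw
  have hUT : ∀ x ∈ U, T x ∈ U := fun x hx => map_mem_growthSubmodule hcomm hx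
  have hUT' : ∀ x ∈ U, T' x ∈ U := fun x hx =>
    map_mem_growthSubmodule (Commute.refl _) hx
  have hVT : ∀ x ∈ V, T x ∈ V := fun x hx => (Submodule.mem_iInf _).2 fun t =>
    map_mem_growthSubmodule (Commute.refl _) ((Submodule.mem_iInf _).1 hx t)
  let Ac : V →L[ℝ] V := LinearMap.toContinuousLinearMap (T.restrict hVT)
  let Au : U ≃L[ℝ] U := (LinearEquiv.ofLinearMap (T.restrict hUT) (T'.restrict hUT')
    (LinearMap.ext fun x => Subtype.ext (hTT' x))
    (LinearMap.ext fun x => Subtype.ext (hT'T x))).toContinuousLinearEquiv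
  have hAc_pow : ∀ n (x : V), ((Ac ^ n) x : Fin d → ℝ) = (T ^ n) x := fun n x => by
    induction n with
    | zero => simp
    | succ n ih => rw [pow_succ', pow_succ', Module.End.mul_apply, ← ih]; rfl
  have hAu_pow : ∀ n (x : U), (((Au.symm : U →L[ℝ] U) ^ n) x : Fin d → ℝ) = (T' ^ n) x :=
    fun n x => by
      induction n with
      | zero => simp
      | succ n ih => rw [pow_succ', pow_succ', Module.End.mul_apply, ← ih]; rfl
  have hAc : ∀ t : ℝ, 1 < t → ∃ C, 0 ≤ C ∧ ∀ n : ℕ, ‖Ac ^ n‖ ≤ C * t ^ n := fun t ht =>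
    exists_opNorm_pow_le Ac (zero_lt_one.trans ht) fun x => by
      obtain ⟨C, hC⟩ := (Submodule.mem_iInf _).1 x.2 ⟨t, ht⟩
      exact ⟨C, fun n => by rw [← Submodule.norm_coe, hAc_pow]; exact hC n⟩
  have hAu : ∃ C, 0 ≤ C ∧ ∀ n : ℕ, ‖(Au.symm : U →L[ℝ] U) ^ n‖ ≤ C * s ^ n :=
    exists_opNorm_pow_le _ hs0 fun x => by
      obtain ⟨C, hC⟩ := x.2
      exact ⟨C, fun n => by rw [← Submodule.norm_coe, hAu_pow]; exact hC n⟩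
  have hdisj : Disjoint U V := by
    rw [Submodule.disjoint_def]
    intro x hxU hxV
    obtain ⟨t, ht1, hts⟩ : ∃ t : ℝ, 1 < t ∧ t * s < 1 := by
      obtain ⟨t, h1, h2⟩ := exists_between ((one_lt_inv₀ hs0).2 hs1)
      exact ⟨t, h1, by rwa [lt_inv_comm₀ (by linarith) hs0, ← one_div,
        lt_div_iff₀ (by linarith), mul_comm] at h2⟩
    obtain ⟨C, hC0, hC⟩ := hAc t ht1
    obtain ⟨D, hD⟩ := hxU
    have hV' : ∀ n, (T' ^ n) x ∈ V := by
      intro n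
      refine (Submodule.mem_iInf _).2 fun t =>
        map_mem_growthSubmodule (hcomm.symm.pow_left n) ((Submodule.mem_iInf _).1 hxV t)
    have hle : ∀ n : ℕ, ‖x‖ ≤ C * D * (t * s) ^ n := fun n => by
      calc ‖x‖ = ‖(Ac ^ n) ⟨_, hV' n⟩‖ := by rw [← Submodule.norm_coe, hAc_pow, hpow]
        _ ≤ ‖Ac ^ n‖ * ‖(T' ^ n) x‖ := (Ac ^ n).le_opNorm _
        _ ≤ (C * t ^ n) * (D * s ^ n) := by
          gcongr
          · exact hC n
          · exact hD n
        _ = _ := by rw [mul_pow]; ring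
    have hlim : Tendsto (fun n : ℕ => C * D * (t * s) ^ n) atTop (nhds (C * D * 0)) :=
      (tendsto_pow_atTop_nhds_zero_of_lt_one (by positivity) hts).const_mul _
    rw [mul_zero] at hlim
    exact norm_le_zero_iff.1 (ge_of_tendsto' hlim hle)
  have hcompl : IsCompl U V := ⟨hdisj, codisjoint_iff.2 (eq_top_iff.2 fun x _ => by
    simpa using hspan fun i => (x i : ℂ))⟩
  obtain ⟨C, hC0, hC⟩ := hAu
  refine ⟨U, V, (Submodule.prodEquivOfIsCompl U V hcompl).symm.toContinuousLinearEquiv, Au, Ac,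
    fun x => ?_, ⟨s, C, hs0, hs1, hC0, hC⟩, hAc⟩
  obtain ⟨⟨u, v⟩, rfl⟩ := (Submodule.prodEquivOfIsCompl U V hcompl).surjective x
  change (Submodule.prodEquivOfIsCompl U V hcompl).symm _ = _
  rw [LinearEquiv.symm_apply_eq]
  simp [Au, Ac, Matrix.mulVec_add, hT]

lemma exists_maximal_separated {X : Type*} {R : X → X → Prop} (hR : ∀ x y, R x y → R y x)
    (hirr : ∀ x, ¬ R x x) (W : Set X) {M : ℕ}
    (hM : ∀ T : Finset X, (T : Set X) ⊆ W → (T : Set X).Pairwise R → T.card ≤ M) :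
    ∃ T : Finset X, (T : Set X) ⊆ W ∧ (T : Set X).Pairwise R ∧ ∀ x ∈ W, ∃ t ∈ T, ¬ R x t := by
  classical
  set S : Set ℕ := {k | ∃ T : Finset X, (T : Set X) ⊆ W ∧ (T : Set X).Pairwise R ∧ T.card = k}
    with hS
  have hbdd : BddAbove S := ⟨M, by rintro k ⟨T, h1, h2, rfl⟩; exact hM T h1 h2⟩
  obtain ⟨T, h1, h2, h3⟩ := Nat.sSup_mem (s := S) ⟨0, ∅, by simp, by simp, rfl⟩ hbdd
  refine ⟨T, h1, h2, fun x hx => ?_⟩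
  by_contra! h
  have hxT : x ∉ T := fun hxT => hirr x (h x hxT)
  have : (insert x T).card ≤ sSup S := by
    refine le_csSup hbdd ⟨insert x T, ?_, ?_, rfl⟩
    · rw [Finset.coe_insert]; exact Set.insert_subset hx h1
    · rw [Finset.coe_insert, Set.pairwise_insert]
      exact ⟨h2, fun b hb _ => ⟨h b hb, hR _ _ (h b hb)⟩⟩
  rw [Finset.card_insert_of_notMem hxT] at this
  omega

section ProductDynamics

variable {U V : Type*} [NormedAddCommGroup U] [NormedSpace ℝ U] [NormedAddCommGroup V]
  [NormedSpace ℝ V]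

/-- Images of a horizontal subspace under iterates of a Lipschitz perturbation of `Bu × Bc` are
Lipschitz graphs. -/
lemma exists_graph_iterate [CompleteSpace U] (Bu : U ≃L[ℝ] U) (Bc : V →L[ℝ] V) (G : U × V → U × V)
    (hb : ‖(Bu.symm : U →L[ℝ] U)‖ ≤ 1 / 4) (hbc : ‖(Bu.symm : U →L[ℝ] U)‖ * ‖Bc‖ ≤ 1 / 4)
    (hG : ∀ x y, ‖(G x - G y) - (Bu (x - y).1, Bc (x - y).2)‖ ≤ ‖x - y‖) (k : ℕ) :
    ∃ σ : U → V, (∀ w w', ‖σ w - σ w'‖ ≤ ‖w - w'‖) ∧ ∀ w, ∃ v, G^[k] (v, 0) = (w, σ w) := by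
  induction k with
  | zero => exact ⟨0, by simp, fun w => ⟨w, rfl⟩⟩
  | succ k ih =>
    obtain ⟨σ, hσ, hk⟩ := ih
    have hS : ∀ z, ‖Bu.symm z‖ ≤ ‖(Bu.symm : U →L[ℝ] U)‖ * ‖z‖ :=
      fun z => (Bu.symm : U →L[ℝ] U).le_opNorm z
    have hnorm : ∀ w w', ‖((w, σ w) : U × V) - (w', σ w')‖ = ‖w - w'‖ := fun w w' => by
      rw [Prod.mk_sub_mk, Prod.norm_mk, max_eq_left (hσ w w')]
    have h1 : ∀ w w', ‖(G (w, σ w)).1 - (G (w', σ w')).1 - Bu (w - w')‖ ≤ ‖w - w'‖ :=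
      fun w w' => (norm_fst_le _).trans ((hG (w, σ w) (w', σ w')).trans_eq (hnorm w w'))
    have h2 : ∀ w w', ‖(G (w, σ w)).2 - (G (w', σ w')).2 - Bc (σ w - σ w')‖ ≤ ‖w - w'‖ :=
      fun w w' => (norm_snd_le _).trans ((hG (w, σ w) (w', σ w')).trans_eq (hnorm w w'))
    have hsol : ∀ z, ∃ w, (G (w, σ w)).1 = z := by
      intro z
      have hc : ContractingWith (1 / 4) fun w => w - Bu.symm ((G (w, σ w)).1 - z) := by
        refine ⟨by rw [← NNReal.coe_lt_coe]; norm_num,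
          LipschitzWith.of_dist_le_mul fun w w' => ?_⟩
        rw [dist_eq_norm, dist_eq_norm]
        have : w - Bu.symm ((G (w, σ w)).1 - z) - (w' - Bu.symm ((G (w', σ w')).1 - z))
            = -Bu.symm ((G (w, σ w)).1 - (G (w', σ w')).1 - Bu (w - w')) := by
          simp only [map_sub, Bu.symm_apply_apply]; abel
        rw [this, norm_neg]
        refine (hS _).trans (mul_le_mul (hb.trans_eq (by norm_num)) (h1 w w') (norm_nonneg _) ?_)
        positivity
      have hfix := hc.fixedPoint_isFixedPt
      refine ⟨hc.fixedPoint, ?_⟩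
      have h0 : Bu.symm ((G (hc.fixedPoint, σ hc.fixedPoint)).1 - z) = 0 := sub_eq_self.1 hfix
      exact sub_eq_zero.1 ((map_eq_zero_iff _ Bu.symm.injective).1 h0)
    choose ω hω using hsol
    refine ⟨fun z => (G (ω z, σ (ω z))).2, fun z z' => ?_, fun z => ?_⟩
    · set b := ‖(Bu.symm : U →L[ℝ] U)‖
      have hw : ‖ω z - ω z'‖ ≤ 4 / 3 * b * ‖z - z'‖ := by
        have h3 : ω z - ω z' = Bu.symm (z - z')
            - Bu.symm ((G (ω z, σ (ω z))).1 - (G (ω z', σ (ω z'))).1 - Bu (ω z - ω z')) := by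
          rw [hω, hω, ← map_sub, sub_sub_cancel, Bu.symm_apply_apply]
        have h4 : ‖ω z - ω z'‖ ≤ b * ‖z - z'‖ + 1 / 4 * ‖ω z - ω z'‖ := by
          conv_lhs => rw [h3]
          exact (norm_sub_le _ _).trans (add_le_add (hS _)
            ((hS _).trans (mul_le_mul hb (h1 _ _) (norm_nonneg _) (by norm_num))))
        linarith
      have h5 : ‖(G (ω z, σ (ω z))).2 - (G (ω z', σ (ω z'))).2‖
          ≤ ‖ω z - ω z'‖ + ‖Bc‖ * ‖ω z - ω z'‖ := by
        rw [← sub_add_cancel ((G (ω z, σ (ω z))).2 - (G (ω z', σ (ω z'))).2)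
          (Bc (σ (ω z) - σ (ω z')))]
        refine (norm_add_le _ _).trans (add_le_add (h2 _ _) ((Bc.le_opNorm _).trans ?_))
        gcongr
        exact hσ _ _
      calc _ ≤ (1 + ‖Bc‖) * ‖ω z - ω z'‖ := by linarith
        _ ≤ (1 + ‖Bc‖) * (4 / 3 * b * ‖z - z'‖) := by gcongr
        _ = 4 / 3 * (b + b * ‖Bc‖) * ‖z - z'‖ := by ring
        _ ≤ 1 * ‖z - z'‖ := by gcongr; linarith
        _ = _ := one_mul _
    · obtain ⟨v, hv⟩ := hk (ω z)
      refine ⟨v, ?_⟩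
      rw [Function.iterate_succ_apply', hv]
      exact Prod.ext (hω z) rfl

lemma norm_symm_pow_iterate_sub_le (Bu : U ≃L[ℝ] U) (Bc : V →L[ℝ] V) (G : U × V → U × V)
    (hb : ‖(Bu.symm : U →L[ℝ] U)‖ ≤ 1 / 4) (hG : ∀ x, ‖G x - (Bu x.1, Bc x.2)‖ ≤ 1) (k : ℕ)
    (x : U × V) : ‖(Bu ^ k).symm (G^[k] x).1 - x.1‖ ≤ 1 := by
  induction k generalizing x with
  | zero => exact (norm_le_zero_iff.2 (sub_self x.1)).trans zero_le_one
  | succ k ih =>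
    have hS : ∀ z, ‖z‖ ≤ 1 → ‖Bu.symm z‖ ≤ 1 / 4 := fun z hz =>
      ((Bu.symm : U →L[ℝ] U).le_opNorm z).trans (by
        simpa using mul_le_mul hb hz (norm_nonneg _) (by norm_num))
    have h : (Bu ^ (k + 1)).symm (G^[k + 1] x).1 - x.1
        = Bu.symm ((Bu ^ k).symm (G^[k] (G x)).1 - (G x).1)
          + Bu.symm ((G x).1 - Bu x.1) := by
      rw [← map_add, sub_add_sub_cancel, map_sub, Bu.symm_apply_apply, pow_succ]
      rfl
    rw [h]
    have := hS _ (ih (G x))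
    have := hS ((G x).1 - Bu x.1) ((norm_fst_le (G x - (Bu x.1, Bc x.2))).trans (hG x))
    exact (norm_add_le _ _).trans (by linarith)

lemma exists_iterate_fst_eq [CompleteSpace U] (Bu : U ≃L[ℝ] U) (Bc : V →L[ℝ] V)
    (G : U × V → U × V)
    (hb : ‖(Bu.symm : U →L[ℝ] U)‖ ≤ 1 / 4) (hbc : ‖(Bu.symm : U →L[ℝ] U)‖ * ‖Bc‖ ≤ 1 / 4)
    (hG : ∀ x y, ‖(G x - G y) - (Bu (x - y).1, Bc (x - y).2)‖ ≤ ‖x - y‖)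
    (hG' : ∀ x, ‖G x - (Bu x.1, Bc x.2)‖ ≤ 1) (k : ℕ) {w : U} (hw : ‖w‖ ≤ 1) :
    ∃ v, ‖v‖ ≤ 2 ∧ (G^[k] (v, 0)).1 = (Bu ^ k) w := by
  obtain ⟨σ, -, hσ⟩ := exists_graph_iterate Bu Bc G hb hbc hG k
  obtain ⟨v, hv⟩ := hσ ((Bu ^ k) w)
  refine ⟨v, ?_, by rw [hv]⟩
  have := norm_symm_pow_iterate_sub_le Bu Bc G hb hG' k (v, 0)
  rw [hv, ContinuousLinearEquiv.symm_apply_apply] at this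
  have h2 := norm_sub_norm_le v w
  rw [norm_sub_rev] at h2
  linarith

open MeasureTheory Module in
lemma card_le_of_pairwise_separated [FiniteDimensional ℝ U] [FiniteDimensional ℝ V]
    (Bu : U ≃L[ℝ] U) (c : ℝ) (hc : 0 ≤ c) (hb : ‖(Bu.symm : U →L[ℝ] U)‖ ≤ 1 / 4)
    (T : Finset (U × V))
    (hT : ∀ x ∈ T, (∃ u, ‖u‖ ≤ 1 ∧ ‖x.1 - Bu u‖ ≤ 1) ∧ ‖x.2‖ ≤ c + 1)
    (hsep : (T : Set (U × V)).Pairwise fun x y => 1 < ‖x - y‖) :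
    (T.card : ℝ) ≤ |LinearMap.det (Bu : U →ₗ[ℝ] U)| * 4 ^ finrank ℝ U
      * (2 * (c + 2)) ^ finrank ℝ V := by
  borelize U V
  set p := finrank ℝ U
  set q := finrank ℝ V
  let μ : Measure U := Measure.addHaar
  let ν : Measure V := Measure.addHaar
  have hdisj : (T : Set (U × V)).PairwiseDisjoint fun t => Metric.ball t (1 / 2) := by
    intro x hx y hy hxy
    refine Metric.ball_disjoint_ball ?_
    rw [dist_eq_norm]
    linarith [hsep hx hy hxy]
  have hsub : (⋃ t ∈ T, Metric.ball t (1 / 2))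
      ⊆ (Bu '' Metric.ball 0 2) ×ˢ Metric.ball (0 : V) (c + 2) := by
    intro y hy
    simp only [Set.mem_iUnion, Metric.mem_ball, dist_eq_norm] at hy
    obtain ⟨t, ht, hyt⟩ := hy
    obtain ⟨⟨u, hu, htu⟩, ht2⟩ := hT t ht
    have h1 : ‖y.1 - t.1‖ < 1 / 2 := (norm_fst_le (y - t)).trans_lt hyt
    have h2 : ‖y.2 - t.2‖ < 1 / 2 := (norm_snd_le (y - t)).trans_lt hyt
    refine ⟨⟨Bu.symm y.1, ?_, Bu.apply_symm_apply _⟩, ?_⟩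
    · have h3 : Bu.symm y.1 = u + Bu.symm ((y.1 - t.1) + (t.1 - Bu u)) := by
        simp
      have h4 : ‖Bu.symm ((y.1 - t.1) + (t.1 - Bu u))‖ ≤ 1 / 4 * (1 / 2 + 1) :=
        ((Bu.symm : U →L[ℝ] U).le_opNorm _).trans (mul_le_mul hb
          ((norm_add_le _ _).trans (add_le_add h1.le htu)) (norm_nonneg _) (by norm_num))
      rw [mem_ball_zero_iff, h3]
      have := norm_add_le u (Bu.symm ((y.1 - t.1) + (t.1 - Bu u)))
      linarith
    · rw [mem_ball_zero_iff]
      have := norm_sub_norm_le y.2 t.2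
      linarith
  have hvol : ∑ t ∈ T, (μ.prod ν) (Metric.ball t (1 / 2))
      ≤ μ (Bu '' Metric.ball 0 2) * ν (Metric.ball 0 (c + 2)) := by
    rw [← Measure.prod_prod,
      ← measure_biUnion_finset hdisj fun _ _ => Metric.isOpen_ball.measurableSet]
    exact measure_mono hsub
  have hball : ∀ t : U × V, (μ.prod ν) (Metric.ball t (1 / 2))
      = μ (Metric.ball 0 (1 / 2)) * ν (Metric.ball 0 (1 / 2)) := fun t => by
    rw [← Prod.mk.eta (p := t), ← ball_prod_same, Measure.prod_prod, μ.addHaar_ball_center,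
      ν.addHaar_ball_center]
  simp only [hball, Finset.sum_const, nsmul_eq_mul] at hvol
  rw [μ.addHaar_image_continuousLinearEquiv, μ.addHaar_ball_of_pos 0 (r := 1 / 2) (by norm_num),
    μ.addHaar_ball_of_pos 0 (r := 2) (by norm_num),
    ν.addHaar_ball_of_pos 0 (r := 1 / 2) (by norm_num),
    ν.addHaar_ball_of_pos 0 (r := c + 2) (by positivity)] at hvol
  have ha : 0 < (μ (Metric.ball 0 1)).toReal :=
    ENNReal.toReal_pos (Metric.measure_ball_pos _ _ one_pos).ne' measure_ball_lt_top.ne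
  have hb : 0 < (ν (Metric.ball 0 1)).toReal :=
    ENNReal.toReal_pos (Metric.measure_ball_pos _ _ one_pos).ne' measure_ball_lt_top.ne
  have hvol' := ENNReal.toReal_mono (by finiteness) hvol
  simp only [ENNReal.toReal_mul, ENNReal.toReal_natCast] at hvol'
  rw [ENNReal.toReal_ofReal (by positivity), ENNReal.toReal_ofReal (by positivity),
    ENNReal.toReal_ofReal (by positivity), ENNReal.toReal_ofReal (by positivity),
    ENNReal.toReal_ofReal (by positivity)] at hvol'
  set a := (μ (Metric.ball 0 1)).toReal
  set b := (ν (Metric.ball 0 1)).toReal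
  set D := |LinearMap.det (Bu : U →ₗ[ℝ] U)|
  have h4 : (4 : ℝ) ^ p = 2 ^ p * 2 ^ p := by rw [← mul_pow]; norm_num
  have h1 : ((1 : ℝ) / 2) ^ p * 2 ^ p = 1 := by rw [← mul_pow]; norm_num
  have h2 : ((1 : ℝ) / 2) ^ q * 2 ^ q = 1 := by rw [← mul_pow]; norm_num
  rw [h4, mul_pow]
  refine le_of_mul_le_mul_right ?_ (mul_pos ha hb)
  calc (T.card : ℝ) * (a * b)
      = (T.card * ((1 / 2) ^ p * a * ((1 / 2) ^ q * b))) * (2 ^ p * 2 ^ q) := by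
        linear_combination (-(T.card : ℝ) * a * b * ((1 / 2) ^ q * 2 ^ q)) * h1
          - (T.card : ℝ) * a * b * h2
    _ ≤ (D * (2 ^ p * a) * ((c + 2) ^ q * b)) * (2 ^ p * 2 ^ q) := by gcongr
    _ = _ := by ring

open Module in
/-- A Lipschitz perturbation of `Bu × Bc` maps every ball into a union of a controlled number of
balls of the same radius. -/
lemma exists_ball_image_cover [FiniteDimensional ℝ U] [FiniteDimensional ℝ V]
    (Bu : U ≃L[ℝ] U) (Bc : V →L[ℝ] V) (G : U × V → U × V)
    (hb : ‖(Bu.symm : U →L[ℝ] U)‖ ≤ 1 / 4)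
    (hG : ∀ x y, ‖(G x - G y) - (Bu (x - y).1, Bc (x - y).2)‖ ≤ ‖x - y‖) :
    ∃ K : ℕ, (K : ℝ) ≤ |LinearMap.det (Bu : U →ₗ[ℝ] U)| * 4 ^ finrank ℝ U
      * (2 * (‖Bc‖ + 2)) ^ finrank ℝ V ∧ ∀ (a : U × V) (r : ℝ), 0 < r →
      ∃ T : Finset (U × V), T.card ≤ K ∧ ∀ x, ‖x - a‖ ≤ r → ∃ t ∈ T, ‖G x - t‖ ≤ r := by
  classical
  obtain ⟨T, hTW, hTsep, hT⟩ := exists_maximal_separated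
    (R := fun x y : U × V => 1 < ‖x - y‖) (fun x y h => by simpa only [norm_sub_rev] using h)
    (fun x => by simp) {x | (∃ u, ‖u‖ ≤ 1 ∧ ‖x.1 - Bu u‖ ≤ 1) ∧ ‖x.2‖ ≤ ‖Bc‖ + 1}
    (fun T h1 h2 => Nat.le_floor
      (card_le_of_pairwise_separated Bu ‖Bc‖ (norm_nonneg _) hb T (fun x hx => h1 hx) h2))
  refine ⟨T.card, card_le_of_pairwise_separated Bu ‖Bc‖ (norm_nonneg _) hb T
    (fun x hx => hTW hx) hTsep, fun a r hr => ⟨T.image fun t => G a + r • t,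
    Finset.card_image_le, fun x hx => ?_⟩⟩
  have he := (hG x a).trans hx
  have h1 : ‖(G x - G a).1 - Bu (x - a).1‖ ≤ r := (norm_fst_le _).trans he
  have h2 : ‖(G x - G a).2 - Bc (x - a).2‖ ≤ r := (norm_snd_le _).trans he
  have hr' : ‖r⁻¹‖ = r⁻¹ := by rw [norm_inv, Real.norm_of_nonneg hr.le]
  obtain ⟨t, ht, hxt⟩ := hT (r⁻¹ • (G x - G a)) (by
    refine ⟨⟨r⁻¹ • (x - a).1, ?_, ?_⟩, ?_⟩
    · rw [norm_smul, hr', inv_mul_le_iff₀ hr, mul_one]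
      exact (norm_fst_le _).trans hx
    · rw [map_smul, Prod.smul_fst, ← smul_sub, norm_smul, hr', inv_mul_le_iff₀ hr, mul_one]
      exact h1
    · rw [Prod.smul_snd, norm_smul, hr', inv_mul_le_iff₀ hr]
      have h3 : ‖Bc (x - a).2‖ ≤ ‖Bc‖ * r :=
        (Bc.le_opNorm _).trans (by gcongr; exact (norm_snd_le _).trans hx)
      have h4 := norm_sub_norm_le (G x - G a).2 (Bc (x - a).2)
      linarith)
  refine ⟨_, Finset.mem_image_of_mem _ ht, ?_⟩
  have h : G x - (G a + r • t) = r • (r⁻¹ • (G x - G a) - t) := by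
    rw [smul_sub, smul_inv_smul₀ hr.ne']; abel
  rw [h, norm_smul, Real.norm_of_nonneg hr.le]
  exact mul_le_of_le_one_right hr.le (not_lt.1 hxt)

end ProductDynamics

lemma card_le_pow_of_separated {Y : Type*} [SeminormedAddCommGroup Y] {G : Y → Y} {K : ℕ} {r : ℝ}
    (hcov : ∀ a, ∃ T : Finset Y, T.card ≤ K ∧ ∀ x, ‖x - a‖ ≤ r → ∃ t ∈ T, ‖G x - t‖ ≤ r)
    {ι : Type*} (k : ℕ) (S : Finset ι) (x : ι → Y) (a : Y) (hx : ∀ i ∈ S, ‖x i - a‖ ≤ r)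
    (hsep : ∀ i ∈ S, ∀ j ∈ S, i ≠ j → ∃ l ≤ k, 2 * r < ‖G^[l] (x i) - G^[l] (x j)‖) :
    S.card ≤ K ^ k := by
  classical
  have hdist : ∀ (y : ι → Y) (b : Y) (i j : ι), ‖y i - b‖ ≤ r → ‖y j - b‖ ≤ r →
      ‖y i - y j‖ ≤ 2 * r := fun y b i j hi hj => by
    have := norm_sub_le_norm_sub_add_norm_sub (y i) b (y j)
    rw [norm_sub_rev b] at this
    linarith
  induction k generalizing S x a with
  | zero =>
    rw [pow_zero, Finset.card_le_one]
    intro i hi j hj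
    by_contra hij
    obtain ⟨l, hl, h⟩ := hsep i hi j hj hij
    obtain rfl : l = 0 := by omega
    exact absurd (hdist x a i j (hx i hi) (hx j hj)) (not_le.2 h)
  | succ k ih =>
    obtain ⟨T, hTK, hT⟩ := hcov a
    choose! τ hτ hτr using hT
    have h1 : S.card ≤ K ^ k * T.card := by
      refine Finset.card_le_mul_card_image_of_maps_to (f := fun i => τ (x i))
        (fun i hi => hτ _ (hx i hi)) _ fun b _ => ?_
      refine ih _ (fun i => G (x i)) b (fun i hi => ?_) fun i hi j hj hij => ?_
      · rw [Finset.mem_filter] at hi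
        rw [← hi.2]
        exact hτr _ (hx i hi.1)
      · rw [Finset.mem_filter] at hi hj
        obtain ⟨l, hl, h⟩ := hsep i hi.1 j hj.1 hij
        rcases l with _ | l
        · exact absurd (hdist x a i j (hx i hi.1) (hx j hj.1)) (not_le.2 h)
        · exact ⟨l, by omega, h⟩
    rw [pow_succ]
    exact h1.trans (Nat.mul_le_mul_left _ hTK)

lemma det_coe_pow {U : Type*} [NormedAddCommGroup U] [NormedSpace ℝ U] (B : U ≃L[ℝ] U) (k : ℕ) :
    LinearMap.det ((B ^ k : U ≃L[ℝ] U) : U →ₗ[ℝ] U) = LinearMap.det (B : U →ₗ[ℝ] U) ^ k := by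
  induction k with
  | zero => rw [pow_zero, pow_zero]; exact LinearMap.det_id
  | succ k ih => rw [pow_succ, pow_succ, ← ih, ← LinearMap.det_comp]; rfl

section TorusDistance

variable {d : ℕ}

lemma latVec_zero : latVec (0 : Fin d → ℤ) = 0 := by
  ext i; simp [latVec]

lemma latVec_sub (m m' : Fin d → ℤ) : latVec (m - m') = latVec m - latVec m' := by
  ext i; simp [latVec]

lemma latVec_neg (m : Fin d → ℤ) : latVec (-m) = -latVec m := by
  ext i; simp [latVec]

lemma matR_mulVec_latVec (A : Matrix (Fin d) (Fin d) ℤ) (m : Fin d → ℤ) :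
    (matR A).mulVec (latVec m) = latVec (A.mulVec m) := by
  ext i; simp [latVec, matR, Matrix.mulVec, dotProduct]

lemma eq_zero_of_norm_latVec_lt_one {m : Fin d → ℤ} (h : ‖latVec m‖ < 1) : m = 0 := by
  funext i
  have h1 := (norm_le_pi_norm (latVec m) i).trans_lt h
  rw [latVec, Real.norm_eq_abs] at h1
  exact Int.abs_lt_one_iff.1 (by exact_mod_cast h1)

lemma bddBelow_norm_sub_latVec (u w : Fin d → ℝ) :
    BddBelow (Set.range fun m : Fin d → ℤ => ‖u - w - latVec m‖) :=
  ⟨0, by rintro _ ⟨m, rfl⟩; exact norm_nonneg _⟩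

lemma distQ_le_norm (u w : Fin d → ℝ) : distQ u w ≤ ‖u - w‖ :=
  (ciInf_le (bddBelow_norm_sub_latVec u w) 0).trans_eq (by rw [latVec_zero, sub_zero])

lemma distQ_self (u : Fin d → ℝ) : distQ u u ≤ 0 :=
  (distQ_le_norm u u).trans_eq (by simp)

lemma distQ_comm (u w : Fin d → ℝ) : distQ u w = distQ w u := by
  refine (Equiv.neg (Fin d → ℤ)).iInf_congr fun m => ?_
  rw [← norm_neg, Equiv.neg_apply, latVec_neg]
  congr 1
  abel

lemma distQ_add_latVec (u w : Fin d → ℝ) (m m' : Fin d → ℤ) :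
    distQ (u + latVec m) (w + latVec m') = distQ u w := by
  refine (Equiv.subRight (m - m')).iInf_congr fun l => ?_
  rw [Equiv.subRight_apply, latVec_sub, latVec_sub]
  congr 1
  abel

lemma exists_norm_sub_latVec_lt {u w : Fin d → ℝ} {c : ℝ} (h : distQ u w < c) :
    ∃ m : Fin d → ℤ, ‖u - w - latVec m‖ < c :=
  exists_lt_of_ciInf_lt h

lemma lt_dynDist_iff {X : Type*} {ρ : X → X → ℝ} {f : X → X} {n : ℕ} {ε : ℝ} (hε : 0 ≤ ε)
    {x y : X} : ε < dynDist ρ f n x y ↔ ∃ j < n, ε < ρ (f^[j] x) (f^[j] y) := by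
  rcases n with _ | n
  · simp [dynDist, hε]
  · rw [dynDist, lt_ciSup_iff (Set.finite_range _).bddAbove]
    exact ⟨fun ⟨j, hj⟩ => ⟨j, j.2, hj⟩, fun ⟨j, hjn, hj⟩ => ⟨⟨j, hjn⟩, hj⟩⟩

lemma iterate_add_latVec {F : (Fin d → ℝ) → (Fin d → ℝ)} {α : (Fin d → ℤ) → (Fin d → ℤ)}
    (hF : ∀ x m, F (x + latVec m) = F x + latVec (α m)) (j : ℕ) (x : Fin d → ℝ) (m : Fin d → ℤ) :
    F^[j] (x + latVec m) = F^[j] x + latVec (α^[j] m) := by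
  induction j with
  | zero => rfl
  | succ j ih => rw [Function.iterate_succ_apply', ih, hF, ← Function.iterate_succ_apply' F,
      ← Function.iterate_succ_apply' α]

lemma norm_iterate_sub_le {E : Type*} [SeminormedAddCommGroup E] {F : E → E} {L : ℝ} (hL : 0 ≤ L)
    (hF : ∀ x y, ‖F x - F y‖ ≤ L * ‖x - y‖) (j : ℕ) (x y : E) :
    ‖F^[j] x - F^[j] y‖ ≤ L ^ j * ‖x - y‖ := by
  induction j with
  | zero => simp
  | succ j ih =>
    rw [Function.iterate_succ_apply', Function.iterate_succ_apply', pow_succ', mul_assoc]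
    exact (hF _ _).trans (by gcongr)

lemma exists_sub_latVec_mem_Icc (x : Fin d → ℝ) :
    ∃ m : Fin d → ℤ, x - latVec m ∈ Set.Icc (0 : Fin d → ℝ) 1 :=
  ⟨fun i => ⌊x i⌋, fun _ => sub_nonneg.2 (Int.floor_le _),
    fun _ => (Int.fract_lt_one _).le⟩

lemma semiconj_iterate_mul {Y : Type*} {F : (Fin d → ℝ) → (Fin d → ℝ)} {Φ : (Fin d → ℝ) → Y}
    {G : Y → Y}
    {N : ℕ} (hG : ∀ x, Φ (F^[N] x) = G (Φ x)) (k : ℕ) (x : Fin d → ℝ) :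
    Φ (F^[N * k] x) = G^[k] (Φ x) := by
  rw [Function.iterate_mul]
  exact (Function.Semiconj.iterate_right (f := Φ) (ga := F^[N]) (gb := G) hG k) x

theorem exists_card_le_of_isSeparated {Y : Type*} [NormedAddCommGroup Y] [NormedSpace ℝ Y]
    {F : (Fin d → ℝ) → (Fin d → ℝ)}
    {α : (Fin d → ℤ) → (Fin d → ℤ)} (hF : ∀ x m, F (x + latVec m) = F x + latVec (α m))
    {L : ℝ} (hL : 1 ≤ L) (hFL : ∀ x y, ‖F x - F y‖ ≤ L * ‖x - y‖)
    (Φ : (Fin d → ℝ) ≃L[ℝ] Y) {G : Y → Y} {N : ℕ} (hN : 0 < N) (hG : ∀ x, Φ (F^[N] x) = G (Φ x))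
    {K : ℕ} (hcov : ∀ (a : Y) (r : ℝ), 0 < r → ∃ T : Finset Y, T.card ≤ K ∧
      ∀ x, ‖x - a‖ ≤ r → ∃ t ∈ T, ‖G x - t‖ ≤ r) {r : ℝ} (hr : 0 < r) :
    ∃ M : ℕ, ∀ n (S : Finset (Fin d → ℝ)), IsSeparated distQ F n r S →
      S.card ≤ M * K ^ (n / N) := by
  classical
  set s : ℝ := ‖(Φ.symm : Y →L[ℝ] Fin d → ℝ)‖
  have hs : 0 ≤ s := norm_nonneg _
  set δ : ℝ := r / (2 * (L ^ N * (s + 1))) with hδ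
  have hδ0 : 0 < δ := by positivity
  have hclose : ∀ x y, ‖Φ x - Φ y‖ ≤ 2 * δ → ∀ i < N, ‖F^[i] x - F^[i] y‖ ≤ r := by
    intro x y hxy i hi
    have h1 : ‖x - y‖ ≤ s * (2 * δ) := by
      calc ‖x - y‖ = ‖Φ.symm (Φ x - Φ y)‖ := by simp
        _ ≤ s * ‖Φ x - Φ y‖ := (Φ.symm : Y →L[ℝ] Fin d → ℝ).le_opNorm _
        _ ≤ _ := by gcongr
    calc ‖F^[i] x - F^[i] y‖ ≤ L ^ i * ‖x - y‖ :=
          norm_iterate_sub_le (zero_le_one.trans hL) hFL i x y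
      _ ≤ L ^ N * ((s + 1) * (2 * δ)) := by
          gcongr
          exact h1.trans (by gcongr; linarith)
      _ = r := by rw [hδ]; field_simp
  obtain ⟨t, -, htfin, ht⟩ := ((isCompact_Icc (a := (0 : Fin d → ℝ)) (b := 1)).image
    Φ.continuous).finite_cover_balls hδ0
  have hclass : ∀ x, ∃ m : Fin d → ℤ, ∃ a ∈ t, ‖Φ (x - latVec m) - a‖ ≤ δ := fun x => by
    obtain ⟨m, hm⟩ := exists_sub_latVec_mem_Icc x
    have := ht ⟨_, hm, rfl⟩
    simp only [Set.mem_iUnion, Metric.mem_ball, dist_eq_norm] at this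
    obtain ⟨a, ha, h⟩ := this
    exact ⟨m, a, ha, h.le⟩
  choose m a hat hma using hclass
  refine ⟨htfin.toFinset.card, fun n S hS => ?_⟩
  rw [mul_comm]
  refine Finset.card_le_mul_card_image_of_maps_to (f := a)
    (fun x _ => htfin.mem_toFinset.2 (hat x)) _ fun b _ => ?_
  refine card_le_pow_of_separated (fun a => hcov a δ hδ0) (n / N) _
    (fun x => Φ (x - latVec (m x))) b (fun x hx => ?_) fun x hx y hy hxy => ?_
  · rw [← (Finset.mem_filter.1 hx).2]; exact hma x
  · obtain ⟨j, hjn, hj⟩ := (lt_dynDist_iff hr.le).1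
      (hS x (Finset.mem_filter.1 hx).1 y (Finset.mem_filter.1 hy).1 hxy)
    refine ⟨j / N, Nat.div_le_div_right hjn.le, ?_⟩
    by_contra! hle
    rw [← semiconj_iterate_mul hG, ← semiconj_iterate_mul hG] at hle
    have h1 := hclose _ _ hle (j % N) (Nat.mod_lt _ hN)
    rw [← Function.iterate_add_apply, ← Function.iterate_add_apply, Nat.mod_add_div] at h1
    have h2 : distQ (F^[j] x) (F^[j] y)
        = distQ (F^[j] (x - latVec (m x))) (F^[j] (y - latVec (m y))) := by
      conv_lhs => rw [← sub_add_cancel x (latVec (m x)), ← sub_add_cancel y (latVec (m y))]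
      rw [iterate_add_latVec hF, iterate_add_latVec hF, distQ_add_latVec]
    rw [h2] at hj
    linarith [distQ_le_norm (F^[j] (x - latVec (m x))) (F^[j] (y - latVec (m y)))]

/-- Orbits that stay close on the torus and start close in `ℝ^d` stay close in `ℝ^d`. -/
lemma norm_iterate_sub_lt_of_distQ_lt {F : (Fin d → ℝ) → (Fin d → ℝ)} {L c : ℝ}
    (hFL : ∀ x y, ‖F x - F y‖ ≤ L * ‖x - y‖) (hL : 0 ≤ L) (hc : c * (L + 1) ≤ 1)
    {x y : Fin d → ℝ} {n : ℕ} (h0 : ‖x - y‖ < c)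
    (h : ∀ j ≤ n, distQ (F^[j] x) (F^[j] y) < c) : ‖F^[n] x - F^[n] y‖ < c := by
  induction n with
  | zero => exact h0
  | succ n ih =>
    have h1 := ih fun j hj => h j (hj.trans n.le_succ)
    obtain ⟨m, hm⟩ := exists_norm_sub_latVec_lt (h (n + 1) le_rfl)
    have h2 : ‖F^[n + 1] x - F^[n + 1] y‖ ≤ L * c := by
      rw [Function.iterate_succ_apply', Function.iterate_succ_apply']
      exact (hFL _ _).trans (by gcongr)
    have h3 : ‖latVec m‖ < 1 := by
      have := norm_sub_norm_le (latVec m) (F^[n + 1] x - F^[n + 1] y)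
      rw [norm_sub_rev (latVec m)] at this
      linarith
    rwa [eq_zero_of_norm_latVec_lt_one h3, latVec_zero, sub_zero] at hm

lemma card_le_sepNum {X : Type*} {ρ : X → X → ℝ} {f : X → X} {n M : ℕ} {r : ℝ}
    (hM : ∀ S : Finset X, IsSeparated ρ f n r S → S.card ≤ M) {S : Finset X}
    (hS : IsSeparated ρ f n r S) : S.card ≤ sepNum ρ f n r :=
  le_csSup ⟨M, by rintro _ ⟨T, hT, rfl⟩; exact hM T hT⟩ ⟨S, hS, rfl⟩

lemma sepNum_le {X : Type*} {ρ : X → X → ℝ} {f : X → X} {n M : ℕ} {r : ℝ}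
    (hM : ∀ S : Finset X, IsSeparated ρ f n r S → S.card ≤ M) : sepNum ρ f n r ≤ M :=
  csSup_le' (by rintro _ ⟨T, hT, rfl⟩; exact hM T hT)

open MeasureTheory in
theorem exists_mul_det_pow_le_sepNum {U V : Type*} [NormedAddCommGroup U] [NormedSpace ℝ U]
    [NormedAddCommGroup V] [NormedSpace ℝ V] [FiniteDimensional ℝ U]
    {F : (Fin d → ℝ) → (Fin d → ℝ)}
    {α : (Fin d → ℤ) → (Fin d → ℤ)} (hF : ∀ x m, F (x + latVec m) = F x + latVec (α m))
    {L : ℝ} (hL : 0 ≤ L) (hFL : ∀ x y, ‖F x - F y‖ ≤ L * ‖x - y‖)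
    (Φ : (Fin d → ℝ) ≃L[ℝ] U × V) {G : U × V → U × V} {N : ℕ}
    (hΦ : ∀ x, Φ (F^[N] x) = G (Φ x)) (Bu : U ≃L[ℝ] U)
    (hsurj : ∀ k w, ‖w‖ ≤ 1 → ∃ v, ‖v‖ ≤ 2 ∧ (G^[k] (v, 0)).1 = (Bu ^ k) w)
    {r : ℝ} (hr : 0 < r) (hrL : 2 * r * (L + 1) ≤ 1)
    (hfin : ∀ n, ∃ M, ∀ S, IsSeparated distQ F n r S → S.card ≤ M) :
    ∃ c : ℝ, 0 < c ∧ ∀ k, c * |LinearMap.det (Bu : U →ₗ[ℝ] U)| ^ k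
      ≤ sepNum distQ F (N * k + 1) r := by
  classical
  borelize U
  let μ : Measure U := Measure.addHaar
  set s : ℝ := ‖(Φ.symm : U × V →L[ℝ] Fin d → ℝ)‖
  set R : ℕ := ⌈4 * s + 1⌉₊
  set ms : Finset (Fin d → ℤ) := Finset.Icc (fun _ => -(R : ℤ)) (fun _ => (R : ℤ))
  set ρ : ℝ := ‖(Φ : (Fin d → ℝ) →L[ℝ] U × V)‖ * (2 * r)
  set a : ℝ := (μ (Metric.closedBall 0 1)).toReal
  set b : ℝ := (μ (Metric.closedBall 0 ρ)).toReal
  have ha : 0 < a := ENNReal.toReal_pos (Metric.measure_closedBall_pos _ _ one_pos).ne'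
    measure_closedBall_lt_top.ne
  have hb : 0 ≤ b := ENNReal.toReal_nonneg
  have hnorm : ∀ x, ‖Φ x‖ ≤ 2 → ‖x‖ ≤ 2 * s := fun x hx => by
    calc ‖x‖ = ‖Φ.symm (Φ x)‖ := by simp
      _ ≤ s * ‖Φ x‖ := (Φ.symm : U × V →L[ℝ] Fin d → ℝ).le_opNorm _
      _ ≤ s * 2 := by gcongr
      _ = 2 * s := mul_comm _ _
  refine ⟨a / (ms.card * b + 1), by positivity, fun k => ?_⟩
  obtain ⟨M, hM⟩ := hfin (N * k + 1)
  obtain ⟨T, hTW, hTsep, hT⟩ := exists_maximal_separated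
    (R := fun x y => r < dynDist distQ F (N * k + 1) x y)
    (fun x y h => by
      rw [lt_dynDist_iff hr.le] at h ⊢
      obtain ⟨j, hj, h⟩ := h
      exact ⟨j, hj, by rwa [distQ_comm]⟩)
    (fun x h => by
      obtain ⟨j, hj, h⟩ := (lt_dynDist_iff hr.le).1 h
      linarith [distQ_self (F^[j] x)])
    {x | ‖Φ x‖ ≤ 2} (M := M) (fun T _ h => hM T fun x hx y hy hxy => h hx hy hxy)
  have hTcard : T.card ≤ sepNum distQ F (N * k + 1) r :=
    card_le_sepNum hM fun x hx y hy hxy => hTsep hx hy hxy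
  have hsub : (Bu ^ k) '' Metric.closedBall 0 1 ⊆ ⋃ z ∈ T ×ˢ ms,
      Metric.closedBall (Φ (F^[N * k] z.1 + latVec (α^[N * k] z.2))).1 ρ := by
    rintro _ ⟨w, hw, rfl⟩
    obtain ⟨v, hv, hvw⟩ := hsurj k w (mem_closedBall_zero_iff.1 hw)
    set x := Φ.symm (v, 0) with hx
    have hΦx : Φ x = (v, 0) := by simp [hx]
    have hx2 : ‖Φ x‖ ≤ 2 := by
      rw [hΦx, Prod.norm_mk, norm_zero, max_eq_left (norm_nonneg _)]; exact hv
    obtain ⟨y, hy, hxy⟩ := hT x hx2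
    have hd : ∀ j ≤ N * k, distQ (F^[j] x) (F^[j] y) < 2 * r := fun j hj => by
      by_contra! h
      exact hxy ((lt_dynDist_iff hr.le).2 ⟨j, Nat.lt_succ_of_le hj, by linarith⟩)
    obtain ⟨m, hm⟩ := exists_norm_sub_latVec_lt (hd 0 (Nat.zero_le _))
    simp only [Function.iterate_zero, id] at hm
    have hshadow : ‖F^[N * k] (x - latVec m) - F^[N * k] y‖ < 2 * r := by
      refine norm_iterate_sub_lt_of_distQ_lt hFL hL hrL (by rwa [sub_right_comm]) fun j hj => ?_
      have := hd j hj
      rw [← sub_add_cancel x (latVec m), iterate_add_latVec hF] at this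
      rwa [← add_zero (F^[j] y), ← latVec_zero, distQ_add_latVec] at this
    have hmR : m ∈ ms := by
      have h1 : ‖latVec m‖ ≤ R := by
        have h2 := norm_sub_norm_le (latVec m) (x - y)
        rw [norm_sub_rev (latVec m)] at h2
        have h3 := norm_sub_le x y
        have h4 := hnorm x hx2
        have h5 := hnorm y (hTW hy)
        have h6 : 4 * s + 1 ≤ R := Nat.le_ceil _
        nlinarith
      have h7 : ∀ i, |m i| ≤ R := fun i => by
        have := (norm_le_pi_norm (latVec m) i).trans h1
        rw [latVec, Real.norm_eq_abs] at this
        exact_mod_cast this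
      exact Finset.mem_Icc.2 ⟨fun i => (abs_le.1 (h7 i)).1, fun i => (abs_le.1 (h7 i)).2⟩
    simp only [Set.mem_iUnion]
    refine ⟨(y, m), Finset.mem_product.2 ⟨hy, hmR⟩, ?_⟩
    have hxk : F^[N * k] x = F^[N * k] (x - latVec m) + latVec (α^[N * k] m) := by
      rw [← iterate_add_latVec hF, sub_add_cancel]
    rw [Metric.mem_closedBall, dist_eq_norm, ← hvw, ← hΦx, ← semiconj_iterate_mul hΦ, hxk,
      ← Prod.fst_sub, ← map_sub, add_sub_add_right_eq_sub]
    refine (norm_fst_le _).trans (((Φ : (Fin d → ℝ) →L[ℝ] U × V).le_opNorm _).trans ?_)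
    exact mul_le_mul_of_nonneg_left hshadow.le (norm_nonneg _)
  have hvol : μ ((Bu ^ k) '' Metric.closedBall 0 1)
      ≤ (T.card * ms.card : ℕ) * μ (Metric.closedBall 0 ρ) := by
    refine (measure_mono hsub).trans ((measure_biUnion_finset_le _ _).trans_eq ?_)
    simp only [μ.addHaar_closedBall_center, Finset.sum_const, nsmul_eq_mul, Finset.card_product]
  rw [μ.addHaar_image_continuousLinearEquiv, det_coe_pow, abs_pow] at hvol
  have hvol' := ENNReal.toReal_mono
    (ENNReal.mul_ne_top (ENNReal.natCast_ne_top _) measure_closedBall_lt_top.ne) hvol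
  rw [ENNReal.toReal_mul, ENNReal.toReal_mul, ENNReal.toReal_natCast,
    ENNReal.toReal_ofReal (by positivity), Nat.cast_mul] at hvol'
  rw [div_mul_eq_mul_div, div_le_iff₀ (by positivity)]
  have hTcard' : (T.card : ℝ) ≤ sepNum distQ F (N * k + 1) r := by exact_mod_cast hTcard
  calc a * |LinearMap.det (Bu : U →ₗ[ℝ] U)| ^ k
      ≤ T.card * (ms.card * b) := by linarith
    _ ≤ sepNum distQ F (N * k + 1) r * (ms.card * b + 1) := by gcongr; linarith

end TorusDistance

lemma topEnt_mem_Icc {X : Type*} {ρ : X → X → ℝ} {f : X → X} {h H : ℝ}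
    (hup : ∀ r > 0, ∃ M : ℝ, ∀ n, Real.log (sepNum ρ f n r) ≤ M + n * H)
    (hlow : ∃ r > 0, ∃ (c : ℝ) (N : ℕ), 0 < N ∧
      ∀ k : ℕ, c + N * k * h ≤ Real.log (sepNum ρ f (N * k + 1) r)) :
    topEnt ρ f ∈ Set.Icc h H := by
  have hev : ∀ r > 0, ∀ b > H, ∀ᶠ n : ℕ in atTop, Real.log (sepNum ρ f n r) / n ≤ b := by
    intro r hr b hb
    obtain ⟨M, hM⟩ := hup r hr
    filter_upwards [tendsto_natCast_atTop_atTop.eventually_ge_atTop (M / (b - H)),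
      eventually_gt_atTop 0] with n hn hn0
    have hn0' : (0 : ℝ) < n := by exact_mod_cast hn0
    rw [div_le_iff₀ (sub_pos.2 hb)] at hn
    rw [div_le_iff₀ hn0']
    linarith [hM n]
  have hbdd : ∀ r > 0, IsBoundedUnder (· ≤ ·) atTop
      fun n : ℕ => Real.log (sepNum ρ f n r) / n := fun r hr =>
    isBoundedUnder_of_eventually_le (hev r hr (H + 1) (by linarith))
  have hcobdd : ∀ r, IsCoboundedUnder (· ≤ ·) atTop
      fun n : ℕ => Real.log (sepNum ρ f n r) / n := fun r =>
    (isBoundedUnder_of_eventually_ge (a := 0) (Eventually.of_forall fun n =>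
      div_nonneg (Real.log_natCast_nonneg _) (Nat.cast_nonneg n))).isCoboundedUnder_le
  have hle : ∀ r > 0, limsup (fun n : ℕ => Real.log (sepNum ρ f n r) / n) atTop ≤ H :=
    fun r hr => le_of_forall_gt_imp_ge_of_dense fun b hb =>
      limsup_le_of_le (hcobdd r) (hev r hr b hb)
  have : Nonempty {e : ℝ // 0 < e} := ⟨⟨1, one_pos⟩⟩
  refine ⟨?_, ciSup_le fun r => hle r r.2⟩
  obtain ⟨r, hr, c, N, hN, hk⟩ := hlow
  refine le_trans ?_ (le_ciSup (f := fun e : {e : ℝ // 0 < e} =>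
    limsup (fun n : ℕ => Real.log (sepNum ρ f n e) / n) atTop)
    ⟨H, by rintro _ ⟨e, rfl⟩; exact hle e e.2⟩ ⟨r, hr⟩)
  refine le_of_forall_lt_imp_le_of_dense fun b hb => ?_
  refine le_limsup_of_frequently_le ?_ (hbdd r hr)
  have htend : Tendsto (fun k : ℕ => N * k + 1) atTop atTop :=
    tendsto_atTop_mono (fun k => (Nat.le_mul_of_pos_left k hN).trans (Nat.le_succ _)) tendsto_id
  refine htend.frequently (Eventually.frequently ?_)
  filter_upwards [tendsto_natCast_atTop_atTop.eventually_ge_atTop ((b - c) / (N * (h - b)))]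
    with k hk'
  have hN' : (0 : ℝ) < N := by exact_mod_cast hN
  rw [div_le_iff₀ (mul_pos hN' (sub_pos.2 hb))] at hk'
  rw [le_div_iff₀ (by positivity)]
  push_cast
  linarith [hk k]

lemma exists_pow_of_growth {s C e : ℝ} (hs0 : 0 < s) (hs1 : s < 1) (hC : 0 ≤ C) (he : 0 < e)
    {a b : ℕ → ℝ} (hb0 : ∀ n, 0 ≤ b n) (ha : ∀ n, a n ≤ C * s ^ n)
    (hb : ∀ t : ℝ, 1 < t → ∃ D, 0 ≤ D ∧ ∀ n, b n ≤ D * t ^ n) (p q : ℕ) :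
    ∃ N : ℕ, 0 < N ∧ a N ≤ 1 / 4 ∧ a N * b N ≤ 1 / 4 ∧
      Real.log (4 ^ p * (2 * (b N + 2)) ^ q) ≤ N * e := by
  obtain ⟨t, ht1, hts, htq⟩ : ∃ t : ℝ, 1 < t ∧ s * t < 1 ∧ q * Real.log t < e / 2 := by
    have h1 : ∀ᶠ t : ℝ in nhdsWithin 1 (Set.Ioi 1), s * t < 1 :=
      nhdsWithin_le_nhds (ContinuousAt.eventually_lt (f := fun t : ℝ => s * t) (by fun_prop)
        continuousAt_const (by simpa using hs1))
    have h2 : ∀ᶠ t : ℝ in nhdsWithin 1 (Set.Ioi 1), q * Real.log t < e / 2 :=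
      nhdsWithin_le_nhds (ContinuousAt.eventually_lt (f := fun t : ℝ => q * Real.log t)
        (continuousAt_const.mul (Real.continuousAt_log one_ne_zero))
        continuousAt_const (by simpa using half_pos he))
    obtain ⟨t, h1, h2, h3⟩ := (h1.and (h2.and self_mem_nhdsWithin)).exists
    exact ⟨t, h3, h1, h2⟩
  obtain ⟨D, hD, hb⟩ := hb t ht1
  have hlim : ∀ {x : ℝ} (K : ℝ), 0 < x → x < 1 → ∀ᶠ n : ℕ in atTop, K * x ^ n ≤ 1 / 4 := by
    intro x K h0 h1
    have := (tendsto_pow_atTop_nhds_zero_of_lt_one h0.le h1).const_mul K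
    rw [mul_zero] at this
    exact this.eventually_le_const (by norm_num)
  obtain ⟨N, h1, h2, h3, h4⟩ := ((hlim C hs0 hs1).and ((hlim (C * D)
    (mul_pos hs0 (by linarith)) hts).and
    ((tendsto_natCast_atTop_atTop.eventually_ge_atTop
      ((p * Real.log 4 + q * Real.log (2 * (D + 2))) / (e / 2))).and
    (eventually_gt_atTop 0)))).exists
  refine ⟨N, h4, (ha N).trans h1, ?_, ?_⟩
  · calc a N * b N ≤ (C * s ^ N) * (D * t ^ N) :=
          mul_le_mul (ha N) (hb N) (hb0 N) (by positivity)
      _ = C * D * (s * t) ^ N := by rw [mul_pow]; ring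
      _ ≤ 1 / 4 := h2
  · have htN : 1 ≤ t ^ N := one_le_pow₀ ht1.le
    have hbN := hb0 N
    have h5 : 2 * (b N + 2) ≤ 2 * (D + 2) * t ^ N := by nlinarith [hb N]
    rw [div_le_iff₀ (half_pos he)] at h3
    calc Real.log (4 ^ p * (2 * (b N + 2)) ^ q)
        = p * Real.log 4 + q * Real.log (2 * (b N + 2)) := by
          rw [Real.log_mul (by positivity) (by positivity), Real.log_pow, Real.log_pow]
      _ ≤ p * Real.log 4 + q * Real.log (2 * (D + 2) * t ^ N) := by gcongr
      _ = p * Real.log 4 + q * Real.log (2 * (D + 2)) + N * (q * Real.log t) := by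
          rw [Real.log_mul (by positivity) (by positivity), Real.log_pow]; ring
      _ ≤ N * (e / 2) + N * (e / 2) := by gcongr
      _ = N * e := by ring

section IteratedPerturbation

variable {E : Type*} [NormedAddCommGroup E] [NormedSpace ℝ E]

lemma norm_iterate_sub_sub_pow_le {F : E → E} (T : E →L[ℝ] E) {η : ℝ} (h0 : 0 ≤ η) (h1 : η ≤ 1)
    (hF : ∀ x y, ‖F x - F y - T (x - y)‖ ≤ η * ‖x - y‖) (n : ℕ) (x y : E) :
    ‖F^[n] x - F^[n] y - (T ^ n) (x - y)‖ ≤ n * (‖T‖ + 1) ^ n * η * ‖x - y‖ := by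
  have hL : ∀ x y, ‖F x - F y‖ ≤ (‖T‖ + 1) * ‖x - y‖ := fun x y => by
    have h2 := norm_sub_norm_le (F x - F y) (T (x - y))
    have h3 := T.le_opNorm (x - y)
    have h4 := mul_le_mul_of_nonneg_right h1 (norm_nonneg (x - y))
    linarith [hF x y]
  induction n with
  | zero => simp
  | succ n ih =>
    have hLn := norm_iterate_sub_le (by positivity) hL n x y
    have hsplit : F^[n + 1] x - F^[n + 1] y - (T ^ (n + 1)) (x - y)
        = (F (F^[n] x) - F (F^[n] y) - T (F^[n] x - F^[n] y))
          + T (F^[n] x - F^[n] y - (T ^ n) (x - y)) := by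
      rw [Function.iterate_succ_apply', Function.iterate_succ_apply', pow_succ',
        map_sub T _ ((T ^ n) (x - y))]
      simp
    set B := ‖T‖ + 1
    have hB : 1 ≤ B := le_add_of_nonneg_left (norm_nonneg T)
    have hTB : ‖T‖ ≤ B := by simp [B]
    rw [hsplit]
    calc _ ≤ η * (B ^ n * ‖x - y‖) + B * (n * B ^ n * η * ‖x - y‖) := by
          refine (norm_add_le _ _).trans (add_le_add ((hF _ _).trans (by gcongr))
            ((T.le_opNorm _).trans (by gcongr)))
      _ ≤ η * (B ^ n * B * ‖x - y‖) + B * (n * B ^ n * η * ‖x - y‖) := by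
          gcongr
          exact le_mul_of_one_le_right (by positivity) hB
      _ = _ := by push_cast; ring

lemma norm_iterate_sub_pow_le {F : E → E} (T : E →L[ℝ] E) {η : ℝ} (h0 : 0 ≤ η)
    (hF : ∀ x, ‖F x - T x‖ ≤ η) (n : ℕ) (x : E) :
    ‖F^[n] x - (T ^ n) x‖ ≤ n * (‖T‖ + 1) ^ n * η := by
  induction n with
  | zero => simp
  | succ n ih =>
    have hsplit : F^[n + 1] x - (T ^ (n + 1)) x
        = (F (F^[n] x) - T (F^[n] x)) + T (F^[n] x - (T ^ n) x) := by
      rw [Function.iterate_succ_apply', pow_succ', map_sub]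
      simp
    set B := ‖T‖ + 1
    have hB : 1 ≤ B := le_add_of_nonneg_left (norm_nonneg T)
    have hTB : ‖T‖ ≤ B := by simp [B]
    rw [hsplit]
    calc _ ≤ η + B * (n * B ^ n * η) := by
          refine (norm_add_le _ _).trans (add_le_add (hF _) ((T.le_opNorm _).trans (by gcongr)))
      _ ≤ B ^ (n + 1) * η + B * (n * B ^ n * η) := by
          gcongr
          exact le_mul_of_one_le_left h0 (one_le_pow₀ hB)
      _ = _ := by push_cast; ring

end IteratedPerturbation

/-- The entropy of small perturbations is pinched around the logarithm of the expansion of volume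
in the unstable direction. -/
theorem exists_topEnt_mem_Icc {d : ℕ} (A : Matrix (Fin d) (Fin d) ℤ) (hA : IsUnit (matR A).det) :
    ∃ h : ℝ, ∀ ε : ℝ, 0 < ε → ∃ η : ℝ, 0 < η ∧
      ∀ g : (Fin d → ℝ) → (Fin d → ℝ),
        (∀ (v : Fin d → ℝ) (m : Fin d → ℤ), g (v + latVec m) = g v) →
        (∀ v, ‖g v‖ ≤ η) → (∀ v w, ‖g v - g w‖ ≤ η * ‖v - w‖) →
        topEnt distQ (fun v => (matR A).mulVec v + g v) ∈ Set.Icc h (h + ε) := by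
  obtain ⟨U, V, Φ, Au, Ac, hΦ, ⟨s, C, hs0, hs1, hC0, hC⟩, hAc⟩ :=
    exists_unstable_splitting (matR A) hA
  set D : ℝ := |LinearMap.det (Au : U →ₗ[ℝ] U)| with hD
  have hD0 : 0 < D := abs_pos.2 Au.toLinearEquiv.isUnit_det'.ne_zero
  refine ⟨Real.log D, fun ε hε => ?_⟩
  obtain ⟨N, hN, hb, hbc, hlog⟩ := exists_pow_of_growth hs0 hs1 hC0 hε
    (a := fun n : ℕ => ‖(Au.symm : U →L[ℝ] U) ^ n‖) (b := fun n : ℕ => ‖Ac ^ n‖)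
    (fun n => ContinuousLinearMap.opNorm_nonneg _) hC hAc
    (Module.finrank ℝ U) (Module.finrank ℝ V)
  beta_reduce at hb hbc hlog
  set Bu : U ≃L[ℝ] U := Au ^ N with hBu
  set Bc : V →L[ℝ] V := Ac ^ N with hBc
  have hBu_symm : (Bu.symm : U →L[ℝ] U) = (Au.symm : U →L[ℝ] U) ^ N := by
    rw [hBu]
    clear_value Bu
    clear hb hbc hlog hBc Bc hN hBu
    induction N with
    | zero => rfl
    | succ n ih => rw [pow_succ', pow_succ, ← ih]; rfl
  rw [← hBu_symm] at hb hbc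
  set T : (Fin d → ℝ) →L[ℝ] (Fin d → ℝ) := LinearMap.toContinuousLinearMap (matR A).mulVecLin
    with hT
  have hTapp : ∀ x, T x = (matR A).mulVec x := fun x => rfl
  have hΦT : ∀ x, Φ ((T ^ N) x) = (Bu (Φ x).1, Bc (Φ x).2) := by
    intro x
    rw [hBu, hBc]
    clear * - hΦ hTapp
    induction N generalizing x with
    | zero => rfl
    | succ n ih =>
      rw [pow_succ, mul_apply_eq_comp, ih, hTapp, hΦ, pow_succ, pow_succ]
      rfl
  set κ : ℝ := N * (‖T‖ + 1) ^ N with hκ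
  set P : ℝ := ‖(Φ : (Fin d → ℝ) →L[ℝ] U × V)‖ with hP
  set Q : ℝ := ‖(Φ.symm : U × V →L[ℝ] Fin d → ℝ)‖ with hQ
  have hP0 : 0 ≤ P := ContinuousLinearMap.opNorm_nonneg _
  have hQ0 : 0 ≤ Q := ContinuousLinearMap.opNorm_nonneg _
  have hκ0 : 0 ≤ κ := by positivity
  refine ⟨(1 + κ * P * (Q + 1))⁻¹, by positivity, fun g hg hgη hgL => ?_⟩
  set η : ℝ := (1 + κ * P * (Q + 1))⁻¹ with hη
  have hη0 : 0 < η := by positivity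
  have hη1 : η ≤ 1 := inv_le_one_of_one_le₀ (le_add_of_nonneg_right (by positivity))
  have hηκ : P * (κ * η) * (Q + 1) ≤ 1 := by
    have : (1 + κ * P * (Q + 1)) * η = 1 := mul_inv_cancel₀ (by positivity)
    nlinarith
  have hηκ1 : P * (κ * η) ≤ 1 :=
    (le_mul_of_one_le_right (by positivity) (le_add_of_nonneg_left hQ0)).trans hηκ
  have hηκ2 : P * (κ * η) * Q ≤ 1 := by
    refine le_trans ?_ hηκ
    gcongr
    linarith
  set F : (Fin d → ℝ) → (Fin d → ℝ) := fun v => (matR A).mulVec v + g v with hFdef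
  have hF1 : ∀ x y, ‖F x - F y - T (x - y)‖ ≤ η * ‖x - y‖ := fun x y => by
    have : F x - F y - T (x - y) = g x - g y := by
      simp only [hTapp, hFdef, Matrix.mulVec_sub]; abel
    rw [this]
    exact hgL x y
  have hF2 : ∀ x, ‖F x - T x‖ ≤ η := fun x => by
    have : F x - T x = g x := by rw [hTapp]; simp [hFdef]
    rw [this]
    exact hgη x
  have hlat : ∀ x m, F (x + latVec m) = F x + latVec (A.mulVec m) := fun x m => by
    simp only [hFdef, hg, Matrix.mulVec_add, matR_mulVec_latVec]; abel
  set L : ℝ := ‖T‖ + 1 with hL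
  have hL1 : 1 ≤ L := le_add_of_nonneg_left (norm_nonneg T)
  have hFL : ∀ x y, ‖F x - F y‖ ≤ L * ‖x - y‖ := fun x y => by
    have h2 := norm_sub_norm_le (F x - F y) (T (x - y))
    have h3 := T.le_opNorm (x - y)
    have h4 := mul_le_mul_of_nonneg_right hη1 (norm_nonneg (x - y))
    linarith [hF1 x y]
  set G : U × V → U × V := fun z => Φ (F^[N] (Φ.symm z)) with hG
  have hΦG : ∀ x, Φ (F^[N] x) = G (Φ x) := fun x => by simp [hG]
  have hΦsub : ∀ z : U × V, (Bu z.1, Bc z.2) = Φ ((T ^ N) (Φ.symm z)) := fun z => by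
    rw [hΦT, Φ.apply_symm_apply]
  have hG1 : ∀ x y, ‖(G x - G y) - (Bu (x - y).1, Bc (x - y).2)‖ ≤ ‖x - y‖ := fun x y => by
    rw [hΦsub, hG, ← map_sub, ← map_sub, map_sub Φ.symm]
    calc _ ≤ P * (κ * η * ‖Φ.symm x - Φ.symm y‖) :=
          ((Φ : (Fin d → ℝ) →L[ℝ] U × V).le_opNorm _).trans (mul_le_mul_of_nonneg_left
            (norm_iterate_sub_sub_pow_le T hη0.le hη1 hF1 N _ _) hP0)
      _ ≤ P * (κ * η * (Q * ‖x - y‖)) := by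
          rw [← map_sub]
          gcongr
          exact (Φ.symm : U × V →L[ℝ] Fin d → ℝ).le_opNorm _
      _ = P * (κ * η) * Q * ‖x - y‖ := by ring
      _ ≤ 1 * ‖x - y‖ := by gcongr
      _ = _ := one_mul _
  have hG2 : ∀ x, ‖G x - (Bu x.1, Bc x.2)‖ ≤ 1 := fun x => by
    rw [hΦsub, hG, ← map_sub]
    exact (((Φ : (Fin d → ℝ) →L[ℝ] U × V).le_opNorm _).trans (mul_le_mul_of_nonneg_left
      (norm_iterate_sub_pow_le T hη0.le hF2 N _) hP0)).trans hηκ1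
  have hdet : |LinearMap.det (Bu : U →ₗ[ℝ] U)| = D ^ N := by rw [det_coe_pow, abs_pow]
  obtain ⟨K, hK, hcov⟩ := exists_ball_image_cover Bu Bc G hb hG1
  have hK1 : 1 ≤ K := by
    obtain ⟨S, hS, h⟩ := hcov 0 1 one_pos
    obtain ⟨t, ht, -⟩ := h 0 (by simp)
    exact (Finset.card_pos.2 ⟨t, ht⟩).trans_le hS
  have hK1' : (1 : ℝ) ≤ K := by exact_mod_cast hK1
  have hlogK : Real.log K ≤ N * (Real.log D + ε) := by
    calc Real.log K ≤ Real.log (D ^ N * (4 ^ Module.finrank ℝ U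
          * (2 * (‖Bc‖ + 2)) ^ Module.finrank ℝ V)) := by
          rw [hdet, mul_assoc] at hK
          exact Real.log_le_log (by linarith) hK
      _ = N * Real.log D + Real.log (4 ^ Module.finrank ℝ U
          * (2 * (‖Bc‖ + 2)) ^ Module.finrank ℝ V) := by
          rw [Real.log_mul (by positivity) (by positivity), Real.log_pow]
      _ ≤ _ := by linarith
  have hN' : (0 : ℝ) < N := by exact_mod_cast hN
  have hbound := fun {r : ℝ} (hr : 0 < r) =>
    exists_card_le_of_isSeparated hlat hL1 hFL Φ hN hΦG hcov hr
  refine topEnt_mem_Icc (fun r hr => ?_) ?_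
  · obtain ⟨M, hM⟩ := hbound hr
    refine ⟨Real.log (M + 1), fun n => ?_⟩
    have h1 : sepNum distQ F n r ≤ (M + 1) * K ^ (n / N) :=
      (sepNum_le (hM n)).trans (Nat.mul_le_mul_right _ M.le_succ)
    have h1' : (sepNum distQ F n r : ℝ) ≤ (M + 1) * (K : ℝ) ^ (n / N) := by exact_mod_cast h1
    have hge : (1 : ℝ) ≤ (M + 1) * (K : ℝ) ^ (n / N) :=
      one_le_mul_of_one_le_of_one_le (by simp) (one_le_pow₀ hK1')
    have h2 : Real.log (sepNum distQ F n r) ≤ Real.log ((M + 1) * (K : ℝ) ^ (n / N)) := by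
      rcases Nat.eq_zero_or_pos (sepNum distQ F n r) with h0 | h0
      · rw [h0, Nat.cast_zero, Real.log_zero]; exact Real.log_nonneg hge
      · exact Real.log_le_log (by exact_mod_cast h0) h1'
    rw [Real.log_mul (by positivity) (by positivity), Real.log_pow] at h2
    have h3 : ((n / N : ℕ) : ℝ) * Real.log K ≤ n / N * Real.log K :=
      mul_le_mul_of_nonneg_right Nat.cast_div_le (Real.log_nonneg hK1')
    have h4 : (n : ℝ) / N * Real.log K ≤ n / N * (N * (Real.log D + ε)) := by gcongr
    have h5 : (n : ℝ) / N * (N * (Real.log D + ε)) = n * (Real.log D + ε) := by field_simp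
    linarith
  · have hr : 0 < (2 * (L + 1))⁻¹ := by positivity
    refine ⟨(2 * (L + 1))⁻¹, hr, ?_⟩
    obtain ⟨c, hc, hck⟩ := exists_mul_det_pow_le_sepNum hlat (zero_le_one.trans hL1) hFL Φ hΦG Bu
      (fun k w hw => exists_iterate_fst_eq Bu Bc G hb hbc hG1 hG2 k hw) hr
      (by field_simp; exact le_rfl) (fun n => by
        obtain ⟨M, hM⟩ := hbound hr
        exact ⟨_, hM n⟩)
    refine ⟨Real.log c, N, hN, fun k => ?_⟩
    have h1 := Real.log_le_log (by rw [hdet]; positivity) (hck k)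
    rw [hdet, ← pow_mul, Real.log_mul hc.ne' (by positivity), Real.log_pow] at h1
    push_cast at h1
    exact h1

/-- continuity of topological entropy at ergodic toral automorphisms
in the `C¹` topology. Let `A ∈ GL(d,ℤ)` be ergodic. For every `ε > 0` there is
`η > 0` such that for every `C¹`, `ℤ^d`-periodic `g : ℝ^d → ℝ^d` of `C¹`-size `< η`
for which `F = A + g` is a `C¹` diffeomorphism of `ℝ^d`, the induced torus
homeomorphism `f` (computed on the lift `F`, with the quotient pseudometric `distQ`)
satisfies `|h_top(f) − h_top(T_A)| ≤ ε`. -/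
theorem statement6 {d : ℕ} (hd : 2 ≤ d) (A : Matrix (Fin d) (Fin d) ℤ)
    (hdet : A.det = 1 ∨ A.det = -1) (herg : IsErgodicMatrix A) :
    ∀ ε : ℝ, 0 < ε → ∃ η : ℝ, 0 < η ∧
      ∀ g : (Fin d → ℝ) → (Fin d → ℝ),
        ContDiff ℝ 1 g →
        (∀ (v : Fin d → ℝ) (m : Fin d → ℤ), g (v + latVec m) = g v) →
        (∀ v : Fin d → ℝ, ‖g v‖ + ‖fderiv ℝ g v‖ < η) →
        Function.Bijective (fun v => (matR A).mulVec v + g v) →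
        ContDiff ℝ 1 (Function.invFun (fun v => (matR A).mulVec v + g v)) →
        |topEnt distQ (fun v => (matR A).mulVec v + g v) -
          topEnt distQ (fun v => (matR A).mulVec v)| ≤ ε := by
  have hA : IsUnit (matR A).det := by
    have hmap : (matR A).det = (A.det : ℝ) := ((Int.castRingHom ℝ).map_det A).symm
    rw [hmap, isUnit_iff_ne_zero]
    rcases hdet with h | h <;> simp [h]
  obtain ⟨h, hh⟩ := exists_topEnt_mem_Icc A hA
  intro ε hε
  obtain ⟨η, hη, H⟩ := hh ε hε
  refine ⟨η, hη, fun g hg hper hsize _ _ => ?_⟩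
  have h1 := H g hper (fun v => by linarith [hsize v, norm_nonneg (fderiv ℝ g v)]) fun v w =>
    Convex.norm_image_sub_le_of_norm_fderiv_le (𝕜 := ℝ) (s := Set.univ)
      (fun x _ => (hg.differentiable one_ne_zero) x)
      (fun x _ => by linarith [hsize x, norm_nonneg (g x)]) convex_univ trivial trivial
  have h2 := H 0 (fun _ _ => rfl) (fun _ => by simpa using hη.le) fun v w => by
    simpa using mul_nonneg hη.le (norm_nonneg (v - w))
  simp only [Pi.zero_apply, add_zero] at h2
  rw [abs_le]
  constructor <;> linarith [h1.1, h1.2, h2.1, h2.2]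

end Paper
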